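/- Let Ω ⊂ ℝ^m be the standard simplex, i.e. the convex hull of {e_0, e_1, …, e_m} where e_0 = 0 and e_1, …, e_m is the standard basis. For j ∈ {1,…,m} let π_j be the hyperplane {x ∈ ℝ^m : x_j = 0}, let π_0 be the hyperplane {x ∈ ℝ^m : x_1 + ⋯ + x_m = 1}, and let Ω^{m−2} be the set of points of Ω that lie on at least two of the hyperplanes π_0, π_1, …, π_m (equivalently, points whose barycentric coordinates vanish in at least two indices). Then there exist a constant ε_0 > 0 (sufficiently small) and a constant C_0 > 0 (sufficiently large), both depending only on m, such that for every i ∈ {0,1,…,m} and every point p ∈ Ω satisfying dist(p, π_i) < ε_0 and C_0 · dist(p, π_i) < dist(p, Ω^{m−2}), one has dist(p, ∂Ω) = dist(p, π_i). -/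

import Mathlib

open Set Metric

/-- The vertices `e₀ = 0, e₁, …, e_m` of the standard simplex in `ℝ^m`. -/
noncomputable def stdVertex (m : ℕ) : Fin (m + 1) → EuclideanSpace ℝ (Fin m) :=
  fun i => Fin.cases 0 (fun j => EuclideanSpace.single j 1) i

/-- The standard simplex `Ω ⊂ ℝ^m`, the convex hull of `{e₀, e₁, …, e_m}`. -/
noncomputable def stdSimplexSet (m : ℕ) : Set (EuclideanSpace ℝ (Fin m)) :=
  convexHull ℝ (Set.range (stdVertex m))

/-- The supporting hyperplanes of the standard simplex: `π 0 = {x : ∑ x_j = 1}` and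
`π j = {x : x_j = 0}` for `j = 1, …, m`. -/
def simplexHyperplane (m : ℕ) : Fin (m + 1) → Set (EuclideanSpace ℝ (Fin m)) :=
  fun i => Fin.cases {x : EuclideanSpace ℝ (Fin m) | (∑ j, x j) = 1}
    (fun j => {x : EuclideanSpace ℝ (Fin m) | x j = 0}) i

/-- The `(m-2)`-skeleton `Ω^{m-2}`: points of `Ω` lying on at least two of the hyperplanes. -/
noncomputable def simplexSkeleton (m : ℕ) : Set (EuclideanSpace ℝ (Fin m)) :=
  {p ∈ stdSimplexSet m | ∃ i j : Fin (m + 1), i ≠ j ∧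
    p ∈ simplexHyperplane m i ∧ p ∈ simplexHyperplane m j}

/-!
Write `βᵢ` for the barycentric coordinates of a point `p` of a simplex. Up to a uniform constant,
`βᵢ` is bounded by the distance from `p` to the facet hyperplane `πᵢ`. If some `πₖ` were closer to
`p` than `πᵢ`, then `βᵢ` and `βₖ` would both be small; their sum being less than `1`, there is a
third vertex, and moving the weights `βᵢ` and `βₖ` onto it produces a point of the codimension-two
skeleton at distance `O(βᵢ + βₖ) = O(dist(p, πᵢ))` from `p`. So `πᵢ` is the nearest facet hyperplane
to a point that is far from the skeleton compared with `dist(p, πᵢ)`, and the distance from such a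
point to the boundary is the distance to the nearest facet hyperplane.
-/

open scoped NNReal

section LipschitzAndFrontier

theorem abs_le_mul_infDist_zeroSet_of_lipschitzWith {X : Type*} [PseudoMetricSpace X] {f : X → ℝ}
    {K : ℝ≥0} (hf : LipschitzWith K f) (hzero : {x | f x = 0}.Nonempty) (x : X) :
    |f x| ≤ K * infDist x {y | f y = 0} := by
  have := hzero.to_subtype
  rw [infDist_eq_iInf, Real.mul_iInf_of_nonneg K.coe_nonneg]
  refine le_ciInf fun ⟨y, (hy : f y = 0)⟩ => ?_
  simpa [Real.dist_eq, hy] using hf.dist_le_mul x y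

variable {E F : Type*} [NormedAddCommGroup E] [NormedSpace ℝ E] [FiniteDimensional ℝ E]
  [NormedAddCommGroup F] [NormedSpace ℝ F]

theorem exists_lipschitzWith_affineMap (f : E →ᵃ[ℝ] F) : ∃ K, LipschitzWith K f := by
  let L : E →L[ℝ] F := f.linear.toContinuousLinearMap
  refine ⟨‖L‖₊, LipschitzWith.of_dist_le_mul fun x y => ?_⟩
  have hsub : f x - f y = L (x - y) := (f.linearMap_vsub x y).symm
  rw [dist_eq_norm, dist_eq_norm, hsub]
  exact L.le_opNorm (x - y)

theorem infDist_frontier_le_dist_of_notMem_interior {s : Set E} {p q : E} (hp : p ∈ s)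
    (hq : q ∉ interior s) : infDist p (frontier s) ≤ dist p q := by
  have hs : s ≠ univ := by
    rintro rfl
    simp at hq
  obtain ⟨y, hy, hdist⟩ := exists_mem_frontier_infDist_compl_eq_dist hp hs
  have hq' : q ∈ closure sᶜ := by rwa [closure_compl]
  calc
    infDist p (frontier s) ≤ dist p y := infDist_le_dist_of_mem hy
    _ = infDist p (closure sᶜ) := by rw [infDist_closure, hdist]
    _ ≤ dist p q := infDist_le_dist_of_mem hq'

end LipschitzAndFrontier

section AffineSimplex

variable {ι E : Type*} [NormedAddCommGroup E] [NormedSpace ℝ E]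

/-- The hyperplane spanned by the facet opposite to the vertex `b i` of the simplex with
vertices `b`. -/
def facetHyperplane (b : AffineBasis ι ℝ E) (i : ι) : Set E :=
  {x | b.coord i x = 0}

/-- The codimension-two skeleton of the simplex with vertices `b`: the points of the simplex that
lie on at least two facet hyperplanes. It is empty if the simplex is a segment. -/
def codimTwoSkeleton (b : AffineBasis ι ℝ E) : Set E :=
  {x ∈ convexHull ℝ (range b) |
    ∃ i j, i ≠ j ∧ x ∈ facetHyperplane b i ∧ x ∈ facetHyperplane b j}

/-- The point obtained from `x` by moving the whole barycentric weight of the vertex `b i` onto the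
vertex `b l`. -/
noncomputable def transferWeight (b : AffineBasis ι ℝ E) (i l : ι) (x : E) : E :=
  x + b.coord i x • (b l - b i)

variable (b : AffineBasis ι ℝ E) {i j k l : ι} {p x : E}

theorem vertex_mem_facetHyperplane (h : i ≠ j) : b j ∈ facetHyperplane b i :=
  b.coord_apply_ne h

theorem facetHyperplane_nonempty [Nontrivial ι] (i : ι) : (facetHyperplane b i).Nonempty :=
  let ⟨j, hj⟩ := exists_ne i
  ⟨b j, vertex_mem_facetHyperplane b hj.symm⟩

theorem coord_transferWeight (i j l : ι) (x : E) :
    b.coord j (transferWeight b i l x) =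
      b.coord j x + b.coord i x * (b.coord j (b l) - b.coord j (b i)) := by
  have hlinear : (b.coord j).linear (b l - b i) = b.coord j (b l) - b.coord j (b i) :=
    (b.coord j).linearMap_vsub _ _
  have hvadd := (b.coord j).map_vadd x (b.coord i x • (b l - b i))
  rw [vadd_eq_add, vadd_eq_add, map_smul, hlinear, smul_eq_mul, add_comm, add_comm (_ * _)] at hvadd
  exact hvadd

theorem coord_transferWeight_self (h : i ≠ l) : b.coord i (transferWeight b i l x) = 0 := by
  rw [coord_transferWeight, b.coord_apply_eq, b.coord_apply_ne h]
  ring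

theorem coord_transferWeight_of_ne (hi : j ≠ i) (hl : j ≠ l) :
    b.coord j (transferWeight b i l x) = b.coord j x := by
  rw [coord_transferWeight, b.coord_apply_ne hi, b.coord_apply_ne hl]
  ring

theorem coord_transferWeight_target (h : l ≠ i) :
    b.coord l (transferWeight b i l x) = b.coord l x + b.coord i x := by
  rw [coord_transferWeight, b.coord_apply_eq, b.coord_apply_ne h]
  ring

theorem coord_nonneg_of_mem_convexHull (hx : x ∈ convexHull ℝ (range b)) (i : ι) :
    0 ≤ b.coord i x := by
  rw [b.convexHull_eq_nonneg_coord] at hx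
  exact hx i

theorem transferWeight_mem_convexHull (h : i ≠ l) (hx : x ∈ convexHull ℝ (range b)) :
    transferWeight b i l x ∈ convexHull ℝ (range b) := by
  have hcoord := coord_nonneg_of_mem_convexHull b hx
  rw [b.convexHull_eq_nonneg_coord]
  intro j
  rcases eq_or_ne j i with rfl | hji
  · exact (coord_transferWeight_self b h).ge
  rcases eq_or_ne j l with rfl | hjl
  · rw [coord_transferWeight_target b hji]
    exact add_nonneg (hcoord j) (hcoord i)
  · rw [coord_transferWeight_of_ne b hji hjl]
    exact hcoord j

variable [Finite ι]

theorem dist_transferWeight_le (hx : x ∈ convexHull ℝ (range b)) (i l : ι) :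
    dist x (transferWeight b i l x) ≤ b.coord i x * diam (range b) := by
  have hi : 0 ≤ b.coord i x := coord_nonneg_of_mem_convexHull b hx i
  have hdiam : dist (b l) (b i) ≤ diam (range b) :=
    dist_le_diam_of_mem (finite_range b).isBounded (mem_range_self l) (mem_range_self i)
  rw [transferWeight, dist_self_add_right, norm_smul, Real.norm_of_nonneg hi, ← dist_eq_norm]
  exact mul_le_mul_of_nonneg_left hdiam hi

theorem exists_mem_codimTwoSkeleton_dist_le (hp : p ∈ convexHull ℝ (range b)) (hik : i ≠ k)
    (hil : i ≠ l) (hkl : k ≠ l) :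
    ∃ q ∈ codimTwoSkeleton b, dist p q ≤ (b.coord i p + b.coord k p) * diam (range b) := by
  let r := transferWeight b i l p
  have hr : r ∈ convexHull ℝ (range b) := transferWeight_mem_convexHull b hil hp
  have hri : b.coord i r = 0 := coord_transferWeight_self b hil
  have hrk : b.coord k r = b.coord k p := coord_transferWeight_of_ne b hik.symm hkl
  refine ⟨transferWeight b k l r, ⟨transferWeight_mem_convexHull b hkl hr, i, k, hik,
    (coord_transferWeight_of_ne b hik hil).trans hri, coord_transferWeight_self b hkl⟩, ?_⟩
  calc
    dist p (transferWeight b k l r) ≤ dist p r + dist r (transferWeight b k l r) :=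
      dist_triangle _ _ _
    _ ≤ b.coord i p * diam (range b) + b.coord k r * diam (range b) :=
      add_le_add (dist_transferWeight_le b hp i l) (dist_transferWeight_le b hr k l)
    _ = (b.coord i p + b.coord k p) * diam (range b) := by rw [hrk, add_mul]

theorem exists_ne_ne_of_coord_add_coord_lt_one (hik : i ≠ k)
    (h : b.coord i p + b.coord k p < 1) : ∃ l, i ≠ l ∧ k ≠ l := by
  classical
  have := Fintype.ofFinite ι
  by_contra! hall
  have huniv : (Finset.univ : Finset ι) = {i, k} := by
    ext l
    simpa [eq_comm, or_iff_not_imp_left] using hall l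
  have hsum := b.sum_coord_apply_eq_one p
  rw [huniv, Finset.sum_pair hik] at hsum
  exact h.ne hsum

theorem frontier_convexHull_range_affineBasis :
    frontier (convexHull ℝ (range b)) =
      {x ∈ convexHull ℝ (range b) | ∃ i, x ∈ facetHyperplane b i} := by
  have hclosed : IsClosed (convexHull ℝ (range b)) := (finite_range b).isClosed_convexHull ℝ
  ext x
  rw [hclosed.frontier_eq, b.interior_convexHull]
  refine and_congr_right fun hx => ?_
  have hcoord := coord_nonneg_of_mem_convexHull b hx
  simp only [mem_ofPred_eq, not_forall, not_lt, facetHyperplane]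
  exact exists_congr fun i => ⟨fun hi => hi.antisymm (hcoord i), le_of_eq⟩

theorem infDist_frontier_le_infDist_facetHyperplane [Nontrivial ι]
    (hp : p ∈ convexHull ℝ (range b)) (i : ι) :
    infDist p (frontier (convexHull ℝ (range b))) ≤ infDist p (facetHyperplane b i) := by
  have := b.finiteDimensional
  refine (le_infDist (facetHyperplane_nonempty b i)).2 fun q (hq : b.coord i q = 0) =>
    infDist_frontier_le_dist_of_notMem_interior hp ?_
  rw [b.interior_convexHull]
  exact fun hpos => (hpos i).ne' hq

theorem infDist_frontier_eq_infDist_facetHyperplane [Nontrivial ι]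
    (hp : p ∈ convexHull ℝ (range b))
    (hnearest : ∀ k, infDist p (facetHyperplane b i) ≤ infDist p (facetHyperplane b k)) :
    infDist p (frontier (convexHull ℝ (range b))) = infDist p (facetHyperplane b i) := by
  refine (infDist_frontier_le_infDist_facetHyperplane b hp i).antisymm ?_
  obtain ⟨j, hji⟩ := exists_ne i
  have hfrontier : (frontier (convexHull ℝ (range b))).Nonempty := by
    rw [frontier_convexHull_range_affineBasis]
    exact ⟨b j, subset_convexHull ℝ _ (mem_range_self j), i, vertex_mem_facetHyperplane b hji.symm⟩
  rw [le_infDist hfrontier, frontier_convexHull_range_affineBasis]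
  rintro q ⟨-, k, hk⟩
  exact (hnearest k).trans (infDist_le_dist_of_mem hk)

theorem exists_coord_le_mul_infDist_facetHyperplane [Nontrivial ι] :
    ∃ K : ℝ, 0 < K ∧ ∀ i p, b.coord i p ≤ K * infDist p (facetHyperplane b i) := by
  have := b.finiteDimensional
  have := Fintype.ofFinite ι
  obtain ⟨K, hK⟩ := exists_lipschitzWith_affineMap b.coords
  refine ⟨K + 1, by positivity, fun i p => ?_⟩
  have hcoord : LipschitzWith (K + 1) (b.coord i) :=
    ((LipschitzWith.eval i).comp hK).weaken (by simp)
  exact (le_abs_self _).trans <| mod_cast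
    abs_le_mul_infDist_zeroSet_of_lipschitzWith hcoord (facetHyperplane_nonempty b i) p

theorem infDist_facetHyperplane_le_of_forall_lt_dist {K : ℝ} (hK : 0 < K)
    (hcoord : ∀ i, b.coord i p ≤ K * infDist p (facetHyperplane b i))
    (hp : p ∈ convexHull ℝ (range b)) (hnear : 2 * K * infDist p (facetHyperplane b i) < 1)
    (hfar : ∀ q ∈ codimTwoSkeleton b,
      2 * K * diam (range b) * infDist p (facetHyperplane b i) < dist p q) (k : ι) :
    infDist p (facetHyperplane b i) ≤ infDist p (facetHyperplane b k) := by
  by_contra! hlt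
  have hik : i ≠ k := by
    rintro rfl
    exact hlt.false
  have hsum : b.coord i p + b.coord k p ≤ 2 * K * infDist p (facetHyperplane b i) := by
    linarith [hcoord i, hcoord k, mul_lt_mul_of_pos_left hlt hK]
  obtain ⟨l, hil, hkl⟩ := exists_ne_ne_of_coord_add_coord_lt_one b hik (hsum.trans_lt hnear)
  obtain ⟨q, hq, hdist⟩ := exists_mem_codimTwoSkeleton_dist_le b hp hik hil hkl
  have hdiam := mul_le_mul_of_nonneg_right hsum (diam_nonneg (s := range b))
  linarith [hfar q hq]

/-- The skeleton hypothesis is stated pointwise because `Metric.infDist p ∅ = 0`: in this form it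
holds vacuously, rather than fails, for a segment. -/
theorem statement1_general [Nontrivial ι] :
    ∃ ε₀ : ℝ, 0 < ε₀ ∧ ∃ C₀ : ℝ, 0 < C₀ ∧
      ∀ i, ∀ p ∈ convexHull ℝ (range b),
        infDist p (facetHyperplane b i) < ε₀ →
        (∀ q ∈ codimTwoSkeleton b, C₀ * infDist p (facetHyperplane b i) < dist p q) →
        infDist p (frontier (convexHull ℝ (range b))) = infDist p (facetHyperplane b i) := by
  obtain ⟨K, hK, hcoord⟩ := exists_coord_le_mul_infDist_facetHyperplane b
  have hdiam : 0 < diam (range b) :=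
    diam_pos (image_univ ▸ nontrivial_univ.image b.ind.injective) (finite_range b).isBounded
  refine ⟨1 / (2 * K), by positivity, 2 * K * diam (range b), by positivity,
    fun i p hp hnear hfar => infDist_frontier_eq_infDist_facetHyperplane b hp ?_⟩
  rw [lt_div_iff₀' (by positivity)] at hnear
  exact infDist_facetHyperplane_le_of_forall_lt_dist b hK (hcoord · p) hp hnear hfar

end AffineSimplex

section StandardSimplex

variable {m : ℕ}

theorem sum_smul_stdVertex_apply (w : Fin (m + 1) → ℝ) (j : Fin m) :
    (∑ i, w i • stdVertex m i) j = w j.succ := by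
  simp [Fin.sum_univ_succ, stdVertex, Pi.single_apply]

theorem affineIndependent_stdVertex (m : ℕ) : AffineIndependent ℝ (stdVertex m) := by
  rw [affineIndependent_iff_of_fintype]
  intro w hw hcomb
  rw [Finset.univ.weightedVSub_eq_linear_combination hw] at hcomb
  have hsucc (j : Fin m) : w j.succ = 0 := by
    rw [← sum_smul_stdVertex_apply w j, hcomb, PiLp.zero_apply]
  refine Fin.cases ?_ hsucc
  simpa [Fin.sum_univ_succ, hsucc] using hw

/-- The vertices of the standard simplex as an affine basis of `ℝ^m`. -/
noncomputable def stdAffineBasis (m : ℕ) : AffineBasis (Fin (m + 1)) ℝ (EuclideanSpace ℝ (Fin m)) :=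
  ⟨stdVertex m, affineIndependent_stdVertex m,
    (affineIndependent_stdVertex m).affineSpan_eq_top_iff_card_eq_finrank_add_one.2 (by simp)⟩

theorem coord_succ_stdAffineBasis (j : Fin m) (x : EuclideanSpace ℝ (Fin m)) :
    (stdAffineBasis m).coord j.succ x = x j := by
  rw [← sum_smul_stdVertex_apply (fun i => (stdAffineBasis m).coord i x) j]
  exact congrArg (· j) ((stdAffineBasis m).linear_combination_coord_eq_self x)

theorem coord_zero_stdAffineBasis (x : EuclideanSpace ℝ (Fin m)) :
    (stdAffineBasis m).coord 0 x = 1 - ∑ j, x j := by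
  have hsum := (stdAffineBasis m).sum_coord_apply_eq_one x
  simp only [Fin.sum_univ_succ, coord_succ_stdAffineBasis] at hsum
  exact eq_sub_of_add_eq hsum

theorem facetHyperplane_stdAffineBasis (i : Fin (m + 1)) :
    facetHyperplane (stdAffineBasis m) i = simplexHyperplane m i := by
  ext x
  cases i using Fin.cases with
  | zero =>
    simp only [facetHyperplane, simplexHyperplane, coord_zero_stdAffineBasis, mem_ofPred_eq,
      Fin.cases_zero]
    rw [sub_eq_zero, eq_comm]
  | succ j => simp [facetHyperplane, simplexHyperplane, coord_succ_stdAffineBasis]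

theorem codimTwoSkeleton_stdAffineBasis :
    codimTwoSkeleton (stdAffineBasis m) = simplexSkeleton m := by
  simp only [codimTwoSkeleton, simplexSkeleton, facetHyperplane_stdAffineBasis]
  rfl

end StandardSimplex

/-- There are `ε₀ > 0` small and `C₀ > 0` large, depending only on `m`, such that for every
`i ∈ {0, …, m}` and every `p ∈ Ω` with `dist (p, π_i) < ε₀` and
`C₀ · dist (p, π_i) < dist (p, Ω^{m-2})`, the distance of `p` to `∂Ω` equals `dist (p, π_i)`. -/
theorem statement1 (m : ℕ) (hm : 0 < m) :
    ∃ ε₀ : ℝ, 0 < ε₀ ∧ ∃ C₀ : ℝ, 0 < C₀ ∧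
      ∀ (i : Fin (m + 1)) (p : EuclideanSpace ℝ (Fin m)), p ∈ stdSimplexSet m →
        Metric.infDist p (simplexHyperplane m i) < ε₀ →
        C₀ * Metric.infDist p (simplexHyperplane m i) < Metric.infDist p (simplexSkeleton m) →
        Metric.infDist p (frontier (stdSimplexSet m)) =
          Metric.infDist p (simplexHyperplane m i) := by
  have : Nontrivial (Fin (m + 1)) := Fin.nontrivial_iff_two_le.2 (by lia)
  obtain ⟨ε₀, hε₀, C₀, hC₀, h⟩ := statement1_general (stdAffineBasis m)
  simp only [facetHyperplane_stdAffineBasis, codimTwoSkeleton_stdAffineBasis] at h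
  exact ⟨ε₀, hε₀, C₀, hC₀, fun i p hp hnear hfar =>
    h i p hp hnear fun q hq => hfar.trans_le (infDist_le_dist_of_mem hq)⟩
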